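/- If z ∈ ℂ satisfies det(z·I − J_cs) = 0 and det(z·I − J^D_cs) = 0 (i.e. z is a common eigenvalue of J_cs and J^D_cs), then z is a critical point of the spectral decimation function, i.e. R′(z) = 0. -/

import Mathlib

open Polynomial

/-- The `(n0+1) × (n0+1)` centrosymmetric tridiagonal Jacobi matrix. -/
noncomputable def Jcs (n0 : ℕ) (a b : ℕ → ℝ) :
    Matrix (Fin (n0 + 1)) (Fin (n0 + 1)) ℝ :=
  Matrix.of fun i j =>
    if (j : ℕ) = (i : ℕ) then b (i : ℕ)
    else if (j : ℕ) = (i : ℕ) + 1 then a ((i : ℕ) + 1)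
    else if (i : ℕ) = (j : ℕ) + 1 then a (n0 - (j : ℕ))
    else 0

/-- The `(n0−1) × (n0−1)` Dirichlet restriction of `Jcs`, obtained by deleting the
first and last rows and columns. -/
noncomputable def JDcs (n0 : ℕ) (a b : ℕ → ℝ) :
    Matrix (Fin (n0 - 1)) (Fin (n0 - 1)) ℝ :=
  Matrix.of fun i j =>
    Jcs n0 a b ⟨(i : ℕ) + 1, by have := i.isLt; omega⟩ ⟨(j : ℕ) + 1, by have := j.isLt; omega⟩

/-!
Leading principal minors of a tridiagonal matrix are continuants, so Euler's identity gives
`χ(J') χ(J'') - χ(J) χ(Jᴰ) = ∏ uᵢ lᵢ`, where `J'` and `J''` are `J` without its last, respectively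
first, row and column, and `Jᴰ` is `J` without both. Centrosymmetry makes `χ(J') = χ(J'')`; both
equal `Q = P n0`, hence `Q² - χ(J) χ(Jᴰ)` is a nonzero constant. At a common root of `χ(J)` and
`χ(Jᴰ)` the derivative of this identity is `2 Q Q' = 0`, while the identity itself says `Q ≠ 0`.
-/

section Continuant

variable {R : Type*} [CommRing R]

/-- The continuant of the diagonal entries `d 0, …, d (n - 1)` with weights `c 0, …, c (n - 2)`:
the determinant of any tridiagonal matrix with diagonal `d` in which `c i` is the product of the
two off-diagonal entries at `(i, i + 1)` and `(i + 1, i)`. -/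
def continuant (d c : ℕ → R) : ℕ → R
  | 0 => 1
  | 1 => d 0
  | n + 2 => d (n + 1) * continuant d c (n + 1) - c n * continuant d c n

theorem continuant_add_two (d c : ℕ → R) (n : ℕ) :
    continuant d c (n + 2) = d (n + 1) * continuant d c (n + 1) - c n * continuant d c n :=
  rfl

theorem eq_continuant_of_recurrence {d c P : ℕ → R} {N : ℕ} (h0 : P 0 = 1) (h1 : P 1 = d 0)
    (h : ∀ k, k + 2 ≤ N → P (k + 2) = d (k + 1) * P (k + 1) - c k * P k) :
    ∀ k ≤ N, P k = continuant d c k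
  | 0, _ => h0
  | 1, _ => h1
  | k + 2, hk => by
    rw [h k hk, eq_continuant_of_recurrence h0 h1 h (k + 1) (by omega),
      eq_continuant_of_recurrence h0 h1 h k (by omega), continuant_add_two]

theorem continuant_add_two_left (d c : ℕ → R) : ∀ n : ℕ,
    continuant d c (n + 2) = d 0 * continuant (fun i => d (i + 1)) (fun i => c (i + 1)) (n + 1) -
      c 0 * continuant (fun i => d (i + 2)) (fun i => c (i + 2)) n
  | 0 => by simp only [continuant]; ring
  | 1 => by simp only [continuant]; ring
  | n + 2 => by
    rw [continuant_add_two, continuant_add_two_left d c (n + 1), continuant_add_two_left d c n]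
    simp only [continuant_add_two]
    ring

theorem continuant_eq_of_reverse : ∀ {n : ℕ} {d c d' c' : ℕ → R},
    (∀ i j, i + j + 1 = n → d' i = d j) → (∀ i j, i + j + 2 = n → c' i = c j) →
    continuant d' c' n = continuant d c n
  | 0, _, _, _, _, _, _ => rfl
  | 1, _, _, _, _, hd, _ => hd 0 0 rfl
  | n + 2, d, c, _, _, hd, hc => by
    rw [continuant_add_two_left, continuant_add_two, hd 0 (n + 1) (by omega), hc 0 n (by omega),
      continuant_eq_of_reverse (d := d) (c := c) (fun i j h => hd (i + 1) j (by omega))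
        (fun i j h => hc (i + 1) j (by omega)),
      continuant_eq_of_reverse (d := d) (c := c) (fun i j h => hd (i + 2) j (by omega))
        (fun i j h => hc (i + 2) j (by omega))]

theorem continuant_euler_identity (d c : ℕ → R) : ∀ n : ℕ,
    continuant d c (n + 1) * continuant (fun i => d (i + 1)) (fun i => c (i + 1)) (n + 1) -
      continuant d c (n + 2) * continuant (fun i => d (i + 1)) (fun i => c (i + 1)) n =
      ∏ i ∈ Finset.range (n + 1), c i
  | 0 => by simp only [continuant, zero_add, Finset.prod_range_one]; ring
  | n + 1 => by
    rw [Finset.prod_range_succ, ← continuant_euler_identity d c n,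
      continuant_add_two d c (n + 1), continuant_add_two (fun i => d (i + 1)) _ n]
    ring

theorem continuant_sq_sub_mul_eq_prod {d c : ℕ → R} {n : ℕ}
    (hd : ∀ i j, i + j = n + 1 → d i = d j) (hc : ∀ i j, i + j = n → c i = c j) :
    continuant d c (n + 1) ^ 2 -
      continuant d c (n + 2) * continuant (fun i => d (i + 1)) (fun i => c (i + 1)) n =
      ∏ i ∈ Finset.range (n + 1), c i := by
  have reverse_shift :
      continuant (fun i => d (i + 1)) (fun i => c (i + 1)) (n + 1) = continuant d c (n + 1) :=
    continuant_eq_of_reverse (fun i j h => hd (i + 1) j (by omega))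
      (fun i j h => hc (i + 1) j (by omega))
  rw [← continuant_euler_identity, reverse_shift, sq]

end Continuant

section Tridiagonal

section Zero

variable {R : Type*} [Zero R]

/-- The `n × n` tridiagonal matrix with entries `d i` at `(i, i)`, `u i` at `(i, i + 1)` and `l i`
at `(i + 1, i)`. -/
def tridiagonal (n : ℕ) (d u l : ℕ → R) : Matrix (Fin n) (Fin n) R :=
  Matrix.of fun i j =>
    if (j : ℕ) = i then d i
    else if (j : ℕ) = i + 1 then u i
    else if (i : ℕ) = j + 1 then l j
    else 0

theorem tridiagonal_submatrix_succ (n : ℕ) (d u l : ℕ → R) :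
    (tridiagonal (n + 1) d u l).submatrix Fin.succ Fin.succ =
      tridiagonal n (fun i => d (i + 1)) (fun i => u (i + 1)) (fun i => l (i + 1)) := by
  ext i j
  simp [tridiagonal]

theorem tridiagonal_submatrix_castSucc (n : ℕ) (d u l : ℕ → R) :
    (tridiagonal (n + 1) d u l).submatrix Fin.castSucc Fin.castSucc = tridiagonal n d u l :=
  rfl

/-- The centrosymmetric Jacobi matrix over an arbitrary type of entries; `Jcs` is the real case. -/
def centrosymmetricJacobi (n : ℕ) (a b : ℕ → R) : Matrix (Fin (n + 1)) (Fin (n + 1)) R :=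
  tridiagonal (n + 1) b (fun i => a (i + 1)) (fun i => a (n - i))

end Zero

variable {R : Type*} [CommRing R]

theorem det_tridiagonal_submatrix_succ_succAbove_one (n : ℕ) (d u l : ℕ → R) :
    ((tridiagonal (n + 2) d u l).submatrix Fin.succ (Fin.succAbove 1)).det =
      l 0 * (tridiagonal n (fun i => d (i + 2)) (fun i => u (i + 2)) (fun i => l (i + 2))).det := by
  have minor : ((tridiagonal (n + 2) d u l).submatrix Fin.succ (Fin.succAbove 1)).submatrix
      (Fin.succAbove 0) Fin.succ =
      tridiagonal n (fun i => d (i + 2)) (fun i => u (i + 2)) (fun i => l (i + 2)) := by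
    ext i j
    simp [tridiagonal]
  rw [Matrix.det_succ_column_zero, Fin.sum_univ_succ, minor, Finset.sum_eq_zero]
  · simp [tridiagonal]
  · intro i _
    simp [tridiagonal]

theorem det_tridiagonal_add_two (n : ℕ) (d u l : ℕ → R) :
    (tridiagonal (n + 2) d u l).det =
      d 0 * (tridiagonal (n + 1) (fun i => d (i + 1)) (fun i => u (i + 1))
        (fun i => l (i + 1))).det -
      u 0 * l 0 * (tridiagonal n (fun i => d (i + 2)) (fun i => u (i + 2))
        (fun i => l (i + 2))).det := by
  rw [Matrix.det_succ_row_zero, Fin.sum_univ_succ, Fin.sum_univ_succ, Finset.sum_eq_zero,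
    Fin.succAbove_zero, tridiagonal_submatrix_succ, Fin.succ_zero_eq_one,
    det_tridiagonal_submatrix_succ_succAbove_one]
  · simp only [Nat.succ_eq_add_one, Fin.coe_ofNat_eq_mod, Nat.zero_mod, pow_zero, tridiagonal,
      Matrix.of_apply, ↓reduceIte, one_mul, Nat.one_mod, pow_one, one_ne_zero, zero_add, neg_mul,
      add_zero]
    ring
  · intro i _
    simp [tridiagonal]

theorem det_tridiagonal : ∀ (n : ℕ) (d u l : ℕ → R),
    (tridiagonal n d u l).det = continuant d (fun i => u i * l i) n
  | 0, _, _, _ => Matrix.det_isEmpty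
  | 1, _, _, _ => Matrix.det_unique _
  | n + 2, d, u, l => by
    rw [det_tridiagonal_add_two, det_tridiagonal (n + 1), det_tridiagonal n,
      continuant_add_two_left]

theorem charmatrix_tridiagonal (n : ℕ) (d u l : ℕ → R) :
    (tridiagonal n d u l).charmatrix =
      tridiagonal n (fun i => X - C (d i)) (fun i => -C (u i)) (fun i => -C (l i)) := by
  ext1 i j
  simp only [Matrix.charmatrix_apply, Matrix.diagonal_apply, tridiagonal, Matrix.of_apply,
    Fin.ext_iff]
  split_ifs <;> first | omega | simp

theorem charpoly_tridiagonal (n : ℕ) (d u l : ℕ → R) :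
    (tridiagonal n d u l).charpoly =
      continuant (fun i => X - C (d i)) (fun i => C (u i * l i)) n := by
  simp only [Matrix.charpoly, charmatrix_tridiagonal, det_tridiagonal, neg_mul_neg, C_mul]

theorem eq_charpoly_tridiagonal_of_recurrence {n : ℕ} {d u l : ℕ → R} {P : ℕ → R[X]}
    (h0 : P 0 = 1) (h1 : P 1 = X - C (d 0))
    (h : ∀ k, k + 2 ≤ n →
      P (k + 2) = (X - C (d (k + 1))) * P (k + 1) - C (u k * l k) * P k) :
    P n = (tridiagonal n d u l).charpoly := by
  rw [charpoly_tridiagonal]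
  exact eq_continuant_of_recurrence (d := fun i => X - C (d i)) (c := fun i => C (u i * l i))
    h0 h1 h n le_rfl

end Tridiagonal

section CriticalPoint

variable {R L : Type*} [CommRing R] [CommRing L] [Algebra R L]

theorem aeval_charpoly_eq_det {m : Type*} [Fintype m] [DecidableEq m] (M : Matrix m m R) (z : L) :
    aeval z M.charpoly = (z • (1 : Matrix m m L) - M.map (algebraMap R L)).det := by
  rw [← eval_map_algebraMap, ← Matrix.charpoly_map, Matrix.eval_charpoly,
    Matrix.smul_one_eq_diagonal, Matrix.scalar_apply]

variable [IsDomain L] [NeZero (2 : L)]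

theorem aeval_derivative_eq_zero_of_sq_sub_mul_eq_C {Q A B : R[X]} {r : R} {z : L}
    (h : Q ^ 2 - A * B = C r) (hr : algebraMap R L r ≠ 0)
    (hA : aeval z A = 0) (hB : aeval z B = 0) : aeval z (derivative Q) = 0 := by
  have value : aeval z Q ^ 2 = algebraMap R L r := by
    simpa [hA] using congrArg (aeval z) h
  have slope : 2 * aeval z Q * aeval z (derivative Q) = 0 := by
    have derived := congrArg (fun p => aeval z (derivative p)) h
    simp only [sq, derivative_mul, derivative_C, map_sub, map_add, map_mul, map_zero, hA,
      hB] at derived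
    linear_combination derived
  have hQ : aeval z Q ≠ 0 := fun hQ => hr (by simpa [hQ] using value.symm)
  exact (mul_eq_zero.mp slope).resolve_left (mul_ne_zero two_ne_zero hQ)

theorem aeval_derivative_charpoly_tridiagonal_eq_zero {n : ℕ} {d u l : ℕ → R}
    (hd : ∀ i j, i + j = n + 1 → d i = d j)
    (hul : ∀ i j, i + j = n → u i * l i = u j * l j)
    (hne : ∀ i ≤ n, algebraMap R L (u i * l i) ≠ 0) {z : L}
    (hJ : aeval z (tridiagonal (n + 2) d u l).charpoly = 0)
    (hJD : aeval z ((tridiagonal (n + 2) d u l).submatrix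
      (Fin.succ ∘ Fin.castSucc) (Fin.succ ∘ Fin.castSucc)).charpoly = 0) :
    aeval z (derivative (tridiagonal (n + 1) d u l).charpoly) = 0 := by
  rw [← Matrix.submatrix_submatrix, tridiagonal_submatrix_succ, tridiagonal_submatrix_castSucc,
    charpoly_tridiagonal] at hJD
  rw [charpoly_tridiagonal] at hJ ⊢
  refine aeval_derivative_eq_zero_of_sq_sub_mul_eq_C
    (r := ∏ i ∈ Finset.range (n + 1), u i * l i) ?_ ?_ hJ hJD
  · rw [map_prod]
    exact continuant_sq_sub_mul_eq_prod (fun i j h => by rw [hd i j h])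
      (fun i j h => by rw [hul i j h])
  · rw [map_prod]
    exact Finset.prod_ne_zero_iff.mpr fun i hi => hne i (Finset.mem_range_succ_iff.mp hi)

end CriticalPoint

theorem statement_9_general {K L : Type*} [Field K] [CommRing L] [IsDomain L] [NeZero (2 : L)]
    [Algebra K L] (n : ℕ) (a b : ℕ → K)
    (ha : ∀ i, 1 ≤ i → i ≤ n + 1 → a i ≠ 0)
    (hb : ∀ j, j ≤ n + 1 → b j = b (n + 1 - j))
    (P : ℕ → K[X]) (hP0 : P 0 = 1) (hP1 : P 1 = X - C (b 0))
    (hP : ∀ k, 2 ≤ k → k ≤ n + 1 → P k =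
      (X - C (b (k - 1))) * P (k - 1) - C (a (k - 1) * a (n + 1 + 2 - k)) * P (k - 2))
    (z : L)
    (hJ : (z • (1 : Matrix (Fin (n + 2)) (Fin (n + 2)) L) -
      (centrosymmetricJacobi (n + 1) a b).map (algebraMap K L)).det = 0)
    (hJD : (z • (1 : Matrix (Fin n) (Fin n) L) -
      ((centrosymmetricJacobi (n + 1) a b).submatrix (Fin.succ ∘ Fin.castSucc)
        (Fin.succ ∘ Fin.castSucc)).map (algebraMap K L)).det = 0) :
    aeval z (derivative (1 - C (∏ i ∈ Finset.Icc 1 (n + 1), a i)⁻¹ * P (n + 1))) = 0 := by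
  rw [← aeval_charpoly_eq_det] at hJ hJD
  have P_eq_charpoly :
      P (n + 1) = (tridiagonal (n + 1) b (fun i => a (i + 1)) (fun i => a (n + 1 - i))).charpoly :=
    eq_charpoly_tridiagonal_of_recurrence hP0 hP1 fun k hk => by
      simpa [Nat.add_sub_add_right] using hP (k + 2) (by omega) hk
  have critical : aeval z (derivative (P (n + 1))) = 0 := by
    rw [P_eq_charpoly]
    refine aeval_derivative_charpoly_tridiagonal_eq_zero ?_ ?_ ?_ hJ hJD
    · rintro i j hij
      rw [hb i (by omega), show n + 1 - i = j by omega]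
    · rintro i j rfl
      rw [mul_comm, show i + j + 1 - i = j + 1 by omega, show i + j + 1 - j = i + 1 by omega]
    · intro i hi
      rw [map_ne_zero_iff _ (algebraMap K L).injective]
      exact mul_ne_zero (ha _ (by omega) (by omega)) (ha _ (by omega) (by omega))
  simp [critical]

/-- If `z ∈ ℂ` is a common eigenvalue of `J_cs` and `J^D_cs`
(i.e. `det(z·I − J_cs) = 0` and `det(z·I − J^D_cs) = 0`), then `z` is a critical point
of the spectral decimation function `R = 1 − (∏ a(i))⁻¹ · P_{n0}`, i.e. `R′(z) = 0`. -/
theorem statement_9 (n0 : ℕ) (hn0 : 2 ≤ n0) (a b : ℕ → ℝ)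
    (ha : ∀ i, 1 ≤ i → i ≤ n0 → a i ≠ 0)
    (hb : ∀ j, j ≤ n0 → b j = b (n0 - j))
    (P : ℕ → Polynomial ℝ)
    (hP0 : P 0 = 1) (hP1 : P 1 = X - C (b 0))
    (hP : ∀ k, 2 ≤ k → k ≤ n0 + 1 →
      P k = (X - C (b (k - 1))) * P (k - 1) - C (a (k - 1) * a (n0 + 2 - k)) * P (k - 2))
    (PD : ℕ → Polynomial ℝ)
    (hPD0 : PD 0 = 1) (hPD1 : PD 1 = X - C (b 1))
    (hPD : ∀ k, 2 ≤ k → k ≤ n0 - 1 →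
      PD k = (X - C (b k)) * PD (k - 1) - C (a k * a (n0 + 1 - k)) * PD (k - 2)) :
    ∀ z : ℂ,
      (z • (1 : Matrix (Fin (n0 + 1)) (Fin (n0 + 1)) ℂ) -
        (Jcs n0 a b).map Complex.ofReal).det = 0 →
      (z • (1 : Matrix (Fin (n0 - 1)) (Fin (n0 - 1)) ℂ) -
        (JDcs n0 a b).map Complex.ofReal).det = 0 →
      Polynomial.aeval z
        (Polynomial.derivative (1 - C (∏ i ∈ Finset.Icc 1 n0, a i)⁻¹ * P n0)) = 0 := by
  obtain ⟨n, rfl⟩ := Nat.exists_eq_add_of_le' (one_le_two.trans hn0)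
  exact statement_9_general n a b ha hb P hP0 hP1 fun k h2 hk => hP k h2 (hk.trans (Nat.le_succ _))
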